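/- arXiv:1410.2700 — 2 statements merged into one kernel-verified Lean document; each statement's English description precedes it below -/
import Mathlib

section
/- The bilateral forward weighted shift T on ℓ²(ℤ) with weights w_n = 2 for n ≥ 0 and w_n = 3 for n < 0 is diskcyclic but not hypercyclic. -/
open Filter Topology Pointwise

/-- The disk orbit of `x` under `T`: `{α • Tⁿ x : n ≥ 0, α ∈ ℂ, |α| ≤ 1}`. -/
def diskOrbit {H : Type*} [NormedAddCommGroup H] [NormedSpace ℂ H]
    (T : H →L[ℂ] H) (x : H) : Set H :=
  {y | ∃ (n : ℕ) (α : ℂ), ‖α‖ ≤ 1 ∧ y = α • (T ^ n) x}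

/-- An operator is diskcyclic if some vector has dense disk orbit. -/
def DiskCyclic {H : Type*} [NormedAddCommGroup H] [NormedSpace ℂ H]
    (T : H →L[ℂ] H) : Prop :=
  ∃ x : H, Dense (diskOrbit T x)

/-- `T` is hypercyclic if some vector has dense orbit. -/
def Hypercyclic {H : Type*} [NormedAddCommGroup H] [NormedSpace ℂ H]
    (T : H →L[ℂ] H) : Prop :=
  ∃ x : H, Dense {y | ∃ n : ℕ, y = (T ^ n) x}

/-!
Fix `c` with `2 < c⁻¹ < 3`. The vectors `f n`, equal to `2ⁿ eₙ` for `n ≥ 0` and to `3ⁿ eₙ` for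
`n ≤ 0`, form a two-sided orbit, `T (f n) = f (n + 1)`, and `cⁿ f n → 0` as `n → ±∞`. Hence
`cⁿ Tⁿ u → 0` for `u` in the dense span of the `f n`, while every `v` in this span equals `cⁿ Tⁿ yₙ`
for some `yₙ → 0`. So `cⁿ Tⁿ (u + yₙ) → v`, and since `|cⁿ| ≤ 1` a Baire category argument produces
a vector with dense disk orbit. On the other hand all weights have modulus at least `1`, so
`‖x‖ ≤ ‖T x‖` and no orbit of a nonzero vector approaches `0`.
-/

section Transitivity

variable {H : Type*} [NormedAddCommGroup H] [NormedSpace ℂ H]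

/-- Disk transitivity, the analogue of topological transitivity for the disk orbits: some
`α • T ^ n` with `‖α‖ ≤ 1` maps a point of `U` into `V`, for all nonempty open sets `U`, `V`. -/
def DiskTransitive (T : H →L[ℂ] H) : Prop :=
  ∀ ⦃U V : Set H⦄, IsOpen U → U.Nonempty → IsOpen V → V.Nonempty →
    ∃ x ∈ U, (diskOrbit T x ∩ V).Nonempty

variable {T : H →L[ℂ] H}

theorem isOpen_setOf_diskOrbit_inter_nonempty {V : Set H} (hV : IsOpen V) :
    IsOpen {x | (diskOrbit T x ∩ V).Nonempty} := by
  have h_union : {x | (diskOrbit T x ∩ V).Nonempty} =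
      ⋃ (n : ℕ) (α : ℂ) (_ : ‖α‖ ≤ 1), (fun x => α • (T ^ n) x) ⁻¹' V := by
    ext x
    simp only [Set.mem_ofPred_eq, Set.mem_iUnion, Set.mem_preimage, exists_prop]
    constructor
    · rintro ⟨_, ⟨n, α, hα, rfl⟩, hxV⟩
      exact ⟨n, α, hα, hxV⟩
    · rintro ⟨n, α, hα, hxV⟩
      exact ⟨_, ⟨n, α, hα, rfl⟩, hxV⟩
  rw [h_union]
  exact isOpen_iUnion fun n => isOpen_iUnion fun α => isOpen_iUnion fun _ =>
    hV.preimage ((T ^ n).continuous.const_smul α)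

theorem DiskTransitive.diskCyclic [BaireSpace H] [SecondCountableTopology H]
    (hT : DiskTransitive T) : DiskCyclic T := by
  have hB := TopologicalSpace.isBasis_countableBasis H
  have h_dense : Dense (⋂ V ∈ TopologicalSpace.countableBasis H,
      {x | (diskOrbit T x ∩ V).Nonempty}) :=
    dense_biInter_of_isOpen
      (fun V hV => isOpen_setOf_diskOrbit_inter_nonempty (hB.isOpen hV))
      (TopologicalSpace.countable_countableBasis H)
      fun V hV => dense_iff_inter_open.2 fun U hU hUne =>
        hT hU hUne (hB.isOpen hV) (TopologicalSpace.nonempty_of_mem_countableBasis hV)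
  obtain ⟨x, hx⟩ := h_dense.nonempty
  refine ⟨x, hB.dense_iff.2 fun V hV _ => ?_⟩
  rw [Set.inter_comm]
  exact Set.mem_iInter₂.1 hx V hV

theorem diskTransitive_of_tendsto {ι : Type*} {l : Filter ι} [l.NeBot] {k : ι → ℕ} {c : ι → ℂ}
    (hc : ∀ i, ‖c i‖ ≤ 1) {D₁ D₂ : Set H} (hD₁ : Dense D₁) (hD₂ : Dense D₂)
    (h_forward : ∀ u ∈ D₁, Tendsto (fun i => c i • (T ^ k i) u) l (𝓝 0))
    (h_backward : ∀ v ∈ D₂, ∃ y : ι → H, Tendsto y l (𝓝 0) ∧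
      Tendsto (fun i => c i • (T ^ k i) (y i)) l (𝓝 v)) :
    DiskTransitive T := by
  intro U V hU hUne hV hVne
  obtain ⟨u, hu, huU⟩ := hD₁.exists_mem_open hU hUne
  obtain ⟨v, hv, hvV⟩ := hD₂.exists_mem_open hV hVne
  obtain ⟨y, hy, hTy⟩ := h_backward v hv
  have h_start : Tendsto (fun i => u + y i) l (𝓝 u) := by simpa using hy.const_add u
  have h_end : Tendsto (fun i => c i • (T ^ k i) (u + y i)) l (𝓝 v) := by
    simpa using (h_forward u hu).add hTy
  obtain ⟨i, hiU, hiV⟩ :=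
    ((h_start.eventually_mem (hU.mem_nhds huU)).and (h_end.eventually_mem (hV.mem_nhds hvV))).exists
  exact ⟨_, hiU, _, ⟨k i, c i, hc i, rfl⟩, hiV⟩

end Transitivity

section TwoSidedOrbit

theorem pow_apply_of_apply_eq_add_one {R M : Type*} [Semiring R] [AddCommMonoid M] [Module R M]
    [TopologicalSpace M] {T : M →L[R] M} {f : ℤ → M} (hf : ∀ m, T (f m) = f (m + 1)) (n : ℕ)
    (m : ℤ) : (T ^ n) (f m) = f (m + n) := by
  induction n with
  | zero => simp
  | succ n ih => rw [pow_succ', mul_apply_eq_comp, ih, hf, Nat.cast_succ, add_assoc]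

theorem tendsto_zpow_smul_comp_add {𝕜 E : Type*} [Field 𝕜] [AddCommGroup E] [Module 𝕜 E]
    [TopologicalSpace E] [ContinuousConstSMul 𝕜 E] {f : ℤ → E} {c : 𝕜} (hc : c ≠ 0)
    (h : Tendsto (fun n : ℤ => c ^ n • f n) cofinite (𝓝 0)) {σ : ℕ → ℤ}
    (hσ : Function.Injective σ) (m : ℤ) :
    Tendsto (fun n => c ^ σ n • f (m + σ n)) atTop (𝓝 0) := by
  have h_inj : Function.Injective fun n => m + σ n := (add_right_injective m).comp hσ
  rw [← Nat.cofinite_eq_atTop]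
  have h_shift := (h.comp h_inj.tendsto_cofinite).const_smul (c ^ (-m))
  simpa only [Function.comp_apply, smul_smul, ← zpow_add₀ hc, neg_add_cancel_left, smul_zero]
    using h_shift

section SpanOfOrbit

variable {𝕜 E : Type*} [Field 𝕜] [AddCommGroup E] [Module 𝕜 E] [TopologicalSpace E]
  [ContinuousConstSMul 𝕜 E] [ContinuousAdd E] {T : E →L[𝕜] E} {f : ℤ → E} {c : 𝕜}

theorem tendsto_pow_smul_pow_apply_of_mem_span (hf : ∀ m, T (f m) = f (m + 1)) (hc : c ≠ 0)
    (h : Tendsto (fun n : ℤ => c ^ n • f n) cofinite (𝓝 0)) {u : E}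
    (hu : u ∈ Submodule.span 𝕜 (Set.range f)) :
    Tendsto (fun n : ℕ => c ^ n • (T ^ n) u) atTop (𝓝 0) := by
  induction hu using Submodule.span_induction with
  | mem u hu =>
    obtain ⟨m, rfl⟩ := hu
    simpa [pow_apply_of_apply_eq_add_one hf] using
      tendsto_zpow_smul_comp_add hc h Nat.cast_injective m
  | zero => simpa using tendsto_const_nhds
  | add u v _ _ hu hv => simpa using hu.add hv
  | smul a u _ hu => simpa [smul_comm a] using hu.const_smul a

theorem exists_tendsto_zero_of_mem_span (hf : ∀ m, T (f m) = f (m + 1)) (hc : c ≠ 0)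
    (h : Tendsto (fun n : ℤ => c ^ n • f n) cofinite (𝓝 0)) {v : E}
    (hv : v ∈ Submodule.span 𝕜 (Set.range f)) :
    ∃ y : ℕ → E, Tendsto y atTop (𝓝 0) ∧ ∀ n, c ^ n • (T ^ n) (y n) = v := by
  induction hv using Submodule.span_induction with
  | mem v hv =>
    obtain ⟨m, rfl⟩ := hv
    refine ⟨fun n => (c ^ n)⁻¹ • f (m - n), ?_, fun n => ?_⟩
    · simpa [sub_eq_add_neg] using
        tendsto_zpow_smul_comp_add hc h (neg_injective.comp Nat.cast_injective) m
    · rw [map_smul, pow_apply_of_apply_eq_add_one hf, smul_inv_smul₀ (pow_ne_zero n hc),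
        sub_add_cancel]
  | zero => exact ⟨0, tendsto_const_nhds, by simp⟩
  | add u v _ _ hu hv =>
    obtain ⟨y, hy, hTy⟩ := hu
    obtain ⟨z, hz, hTz⟩ := hv
    exact ⟨fun n => y n + z n, by simpa using hy.add hz, fun n => by
      rw [map_add, smul_add, hTy, hTz]⟩
  | smul a v _ hv =>
    obtain ⟨y, hy, hTy⟩ := hv
    exact ⟨fun n => a • y n, by simpa using hy.const_smul a, fun n => by
      rw [map_smul, smul_comm, hTy]⟩

end SpanOfOrbit

variable {H : Type*} [NormedAddCommGroup H] [NormedSpace ℂ H] {T : H →L[ℂ] H} {f : ℤ → H}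

theorem diskTransitive_of_tendsto_zpow_smul (hf : ∀ m, T (f m) = f (m + 1))
    (hf_dense : Dense (Submodule.span ℂ (Set.range f) : Set H)) {c : ℂ} (hc₀ : c ≠ 0)
    (hc₁ : ‖c‖ ≤ 1) (h : Tendsto (fun n : ℤ => c ^ n • f n) cofinite (𝓝 0)) :
    DiskTransitive T := by
  refine diskTransitive_of_tendsto (l := atTop) (k := id) (c := fun n => c ^ n)
    (fun n => by simpa using pow_le_one₀ (norm_nonneg c) hc₁) hf_dense hf_dense
    (fun u hu => tendsto_pow_smul_pow_apply_of_mem_span hf hc₀ h hu) fun v hv => ?_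
  obtain ⟨y, hy, hTy⟩ := exists_tendsto_zero_of_mem_span hf hc₀ h hv
  exact ⟨y, hy, tendsto_const_nhds.congr fun n => (hTy n).symm⟩

theorem diskCyclic_of_tendsto_zpow_smul [BaireSpace H] (hf : ∀ m, T (f m) = f (m + 1))
    (hf_dense : Dense (Submodule.span ℂ (Set.range f) : Set H)) {c : ℂ} (hc₀ : c ≠ 0)
    (hc₁ : ‖c‖ ≤ 1) (h : Tendsto (fun n : ℤ => c ^ n • f n) cofinite (𝓝 0)) :
    DiskCyclic T := by
  have : TopologicalSpace.SeparableSpace H := by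
    rw [← TopologicalSpace.isSeparable_univ_iff, ← hf_dense.closure_eq]
    exact (Set.countable_range f).isSeparable.span.closure
  have := UniformSpace.secondCountable_of_separable H
  exact (diskTransitive_of_tendsto_zpow_smul hf hf_dense hc₀ hc₁ h).diskCyclic

end TwoSidedOrbit

theorem not_hypercyclic_of_norm_le_norm_apply {H : Type*} [NormedAddCommGroup H]
    [NormedSpace ℂ H] [Nontrivial H] {T : H →L[ℂ] H} (hT : ∀ x, ‖x‖ ≤ ‖T x‖) :
    ¬ Hypercyclic T := by
  rintro ⟨x, hx⟩
  have h_pow (n : ℕ) : ‖x‖ ≤ ‖(T ^ n) x‖ := by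
    induction n with
    | zero => simp
    | succ n ih =>
      rw [pow_succ', mul_apply_eq_comp]
      exact ih.trans (hT _)
  have hx₀ : x = 0 := by
    by_contra hx_ne
    obtain ⟨_, ⟨n, rfl⟩, hn⟩ := hx.exists_mem_open Metric.isOpen_ball
      ⟨0, Metric.mem_ball_self (norm_pos_iff.2 hx_ne)⟩
    exact (h_pow n).not_gt (mem_ball_zero_iff.1 hn)
  obtain ⟨_, ⟨n, rfl⟩, hn⟩ := hx.exists_mem_open isOpen_compl_singleton (exists_ne (0 : H))
  exact hn (by simp [hx₀])

section SequenceSpace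

variable {α β : Type*} {p : ENNReal}

theorem norm_le_norm_of_norm_apply_le_norm_apply_comp {E : α → Type*} {F : β → Type*}
    [∀ i, NormedAddCommGroup (E i)] [∀ j, NormedAddCommGroup (F j)] (hp : p ≠ 0)
    {σ : α → β} (hσ : Function.Injective σ) {x : lp E p} {y : lp F p}
    (hxy : ∀ i, ‖x i‖ ≤ ‖y (σ i)‖) : ‖x‖ ≤ ‖y‖ := by
  rcases eq_or_ne p ⊤ with rfl | hp_top
  · exact lp.norm_le_of_forall_le (norm_nonneg _) fun i =>
      (hxy i).trans (lp.norm_apply_le_norm hp y (σ i))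
  · have hp_pos := ENNReal.toReal_pos hp hp_top
    refine lp.norm_le_of_forall_sum_le hp_pos (lp.norm_nonneg' _) fun s => ?_
    calc ∑ i ∈ s, ‖x i‖ ^ p.toReal
      _ ≤ ∑ i ∈ s, ‖y (σ i)‖ ^ p.toReal := by gcongr with i; exact hxy i
      _ = ∑ j ∈ s.map ⟨σ, hσ⟩, ‖y j‖ ^ p.toReal := by simp
      _ ≤ ‖y‖ ^ p.toReal := lp.sum_rpow_le_norm_rpow hp_pos y _

theorem dense_span_range_lp_single [DecidableEq α] {𝕜 : Type*} [NormedField 𝕜]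
    [Fact (1 ≤ p)] (hp : p ≠ ⊤) {a : α → 𝕜} (ha : ∀ i, a i ≠ 0) :
    Dense (Submodule.span 𝕜 (Set.range fun i =>
      (lp.single p i (a i) : lp (fun _ : α => 𝕜) p)) : Set (lp (fun _ : α => 𝕜) p)) := by
  intro x
  refine mem_closure_of_tendsto (lp.hasSum_single hp x)
    (Eventually.of_forall fun s => Submodule.sum_mem _ fun i _ => ?_)
  have h_smul : lp.single p i (x i) =
      (x i / a i) • (lp.single p i (a i) : lp (fun _ : α => 𝕜) p) := by
    rw [← lp.single_smul, smul_eq_mul, div_mul_cancel₀ _ (ha i)]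
  rw [h_smul]
  exact Submodule.smul_mem _ _ (Submodule.subset_span ⟨i, rfl⟩)

end SequenceSpace

section WeightProd

/-- The product of the weights from `0` to `n`, i.e. `w 0 * ⋯ * w (n - 1)` for `n ≥ 0` and
`(w (-1) * ⋯ * w n)⁻¹` for `n < 0`. One of the two intervals is always empty. -/
noncomputable def weightProd {K : Type*} [Field K] (w : ℤ → K) (n : ℤ) : K :=
  (∏ k ∈ Finset.Ico 0 n, w k) / ∏ k ∈ Finset.Ico n 0, w k

theorem weightProd_ne_zero {K : Type*} [Field K] {w : ℤ → K} (hw : ∀ n, w n ≠ 0) (n : ℤ) :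
    weightProd w n ≠ 0 :=
  div_ne_zero (Finset.prod_ne_zero_iff.2 fun k _ => hw k)
    (Finset.prod_ne_zero_iff.2 fun k _ => hw k)

theorem weightProd_add_one {K : Type*} [Field K] {w : ℤ → K} (hw : ∀ n, w n ≠ 0) (n : ℤ) :
    weightProd w (n + 1) = w n * weightProd w n := by
  rcases le_or_gt 0 n with hn | hn
  · have h_insert : Finset.Ico 0 (n + 1) = insert n (Finset.Ico 0 n) :=
      (Finset.insert_Ico_right_eq_Ico_add_one hn).symm
    have h_succ : 0 ≤ n + 1 := by lia
    simp only [weightProd, h_insert, Finset.Ico_eq_empty_of_le hn, Finset.Ico_eq_empty_of_le h_succ,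
      Finset.prod_empty, div_one, Finset.prod_insert Finset.right_notMem_Ico]
  · have h_insert : Finset.Ico n 0 = insert n (Finset.Ico (n + 1) 0) :=
      (Finset.insert_Ico_add_one_left_eq_Ico hn).symm
    have h_succ : n + 1 ≤ 0 := hn
    have h_notMem : n ∉ Finset.Ico (n + 1) 0 := by simp
    simp only [weightProd, h_insert, Finset.Ico_eq_empty_of_le hn.le,
      Finset.Ico_eq_empty_of_le h_succ, Finset.prod_empty, Finset.prod_insert h_notMem, one_div,
      mul_inv, mul_inv_cancel_left₀ (hw n)]

variable {K : Type*} [NormedField K] {w : ℤ → K}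

theorem norm_weightProd_natCast_le {r : ℝ} (hr : ∀ n, 0 ≤ n → ‖w n‖ ≤ r) (n : ℕ) :
    ‖weightProd w n‖ ≤ r ^ n := by
  calc ‖weightProd w n‖
    _ = ∏ k ∈ Finset.Ico 0 (n : ℤ), ‖w k‖ := by simp [weightProd]
    _ ≤ ∏ _k ∈ Finset.Ico 0 (n : ℤ), r :=
      Finset.prod_le_prod (fun _ _ => norm_nonneg _) fun k hk => hr k (Finset.mem_Ico.1 hk).1
    _ = r ^ n := by simp

theorem norm_weightProd_neg_natCast_le {s : ℝ} (hs₀ : 0 < s) (hs : ∀ n, n < 0 → s ≤ ‖w n‖)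
    (n : ℕ) : ‖weightProd w (-n)‖ ≤ (s ^ n)⁻¹ := by
  calc ‖weightProd w (-n)‖
    _ = (∏ k ∈ Finset.Ico (-n : ℤ) 0, ‖w k‖)⁻¹ := by simp [weightProd]
    _ ≤ (∏ _k ∈ Finset.Ico (-n : ℤ) 0, s)⁻¹ :=
      inv_anti₀ (Finset.prod_pos fun _ _ => hs₀) <|
        Finset.prod_le_prod (fun _ _ => hs₀.le) fun k hk => hs k (Finset.mem_Ico.1 hk).2
    _ = (s ^ n)⁻¹ := by simp

theorem summable_norm_zpow_mul_weightProd {r s : ℝ} (hs₀ : 0 < s)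
    (hr : ∀ n, 0 ≤ n → ‖w n‖ ≤ r) (hs : ∀ n, n < 0 → s ≤ ‖w n‖) {c : K}
    (hcr : ‖c‖ * r < 1) (hcs : 1 < ‖c‖ * s) :
    Summable fun n : ℤ => ‖c ^ n * weightProd w n‖ := by
  have hr₀ : 0 ≤ r := (norm_nonneg _).trans (hr 0 le_rfl)
  refine .of_nat_of_neg ?_ ?_
  · refine .of_nonneg_of_le (fun _ => norm_nonneg _) (fun n => ?_)
      (summable_geometric_of_lt_one (by positivity) hcr)
    rw [norm_mul, zpow_natCast, norm_pow, mul_pow]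
    gcongr
    exact norm_weightProd_natCast_le hr n
  · refine .of_nonneg_of_le (fun _ => norm_nonneg _) (fun n => ?_)
      (summable_geometric_of_lt_one (by positivity) (inv_lt_one_of_one_lt₀ hcs))
    rw [norm_mul, zpow_neg, zpow_natCast, norm_inv, norm_pow, inv_pow, mul_pow, mul_inv]
    gcongr
    exact norm_weightProd_neg_natCast_le hs₀ hs n

end WeightProd

section ForwardShift

variable {p : ENNReal} [Fact (1 ≤ p)]

/-- `T` is the bilateral forward shift `eₙ ↦ w n • eₙ₊₁` on `ℓᵖ(ℤ)`, expressed through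
coordinates. -/
def IsForwardShift {𝕜 : Type*} [NormedField 𝕜] (w : ℤ → 𝕜)
    (T : lp (fun _ : ℤ => 𝕜) p →L[𝕜] lp (fun _ : ℤ => 𝕜) p) : Prop :=
  ∀ x n, T x (n + 1) = w n * x n

namespace IsForwardShift

section NormedField

variable {𝕜 : Type*} [NormedField 𝕜] {w : ℤ → 𝕜}
  {T : lp (fun _ : ℤ => 𝕜) p →L[𝕜] lp (fun _ : ℤ => 𝕜) p}

theorem apply_single (hT : IsForwardShift w T) (m : ℤ) (a : 𝕜) :
    T (lp.single p m a) = lp.single p (m + 1) (w m * a) := by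
  ext n
  obtain ⟨n, rfl⟩ : ∃ k, n = k + 1 := ⟨n - 1, by simp⟩
  rw [hT, lp.single_apply, lp.single_apply]
  rcases eq_or_ne n m with rfl | h
  · simp
  · simp [h]

theorem norm_le_norm_apply (hT : IsForwardShift w T) (hw : ∀ n, 1 ≤ ‖w n‖)
    (x : lp (fun _ : ℤ => 𝕜) p) : ‖x‖ ≤ ‖T x‖ := by
  refine norm_le_norm_of_norm_apply_le_norm_apply_comp (zero_lt_one.trans_le Fact.out).ne'
    (add_left_injective (1 : ℤ)) fun n => ?_
  rw [hT, norm_mul]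
  exact le_mul_of_one_le_left (norm_nonneg _) (hw n)

end NormedField

variable {w : ℤ → ℂ} {T : lp (fun _ : ℤ => ℂ) p →L[ℂ] lp (fun _ : ℤ => ℂ) p}

theorem not_hypercyclic (hT : IsForwardShift w T) (hw : ∀ n, 1 ≤ ‖w n‖) : ¬ Hypercyclic T :=
  have : Nontrivial (lp (fun _ : ℤ => ℂ) p) :=
    (lp.isometry_single (E := fun _ : ℤ => ℂ) 0).injective.nontrivial
  not_hypercyclic_of_norm_le_norm_apply (hT.norm_le_norm_apply hw)

theorem diskCyclic (hT : IsForwardShift w T) (hp : p ≠ ⊤) (hw : ∀ n, w n ≠ 0) {r s : ℝ}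
    (hrs : r < s) (hs₁ : 1 < s) (hr : ∀ n, 0 ≤ n → ‖w n‖ ≤ r) (hs : ∀ n, n < 0 → s ≤ ‖w n‖) :
    DiskCyclic T := by
  obtain ⟨t, ht, hts⟩ := exists_between (max_lt hrs hs₁)
  obtain ⟨hrt, ht₁⟩ := max_lt_iff.1 ht
  have ht₀ : 0 < t := one_pos.trans ht₁
  have ht_norm : ‖(t : ℂ)⁻¹‖ = t⁻¹ := by simp [ht₀.le]
  have h_summable := summable_norm_zpow_mul_weightProd (one_pos.trans hs₁) hr hs (c := (t : ℂ)⁻¹)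
    (by rwa [ht_norm, inv_mul_lt_one₀ ht₀]) (by rwa [ht_norm, one_lt_inv_mul₀ ht₀])
  refine diskCyclic_of_tendsto_zpow_smul (f := fun n => lp.single p n (weightProd w n))
    (c := (t : ℂ)⁻¹) (fun m => ?_) (dense_span_range_lp_single hp (weightProd_ne_zero hw))
    (by simpa using ht₀.ne') (by rw [ht_norm]; exact inv_le_one_of_one_le₀ ht₁.le) ?_
  · rw [hT.apply_single, weightProd_add_one hw]
  · rw [tendsto_zero_iff_norm_tendsto_zero]
    refine h_summable.tendsto_cofinite_zero.congr fun n => ?_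
    rw [← lp.single_smul, lp.norm_single (zero_lt_one.trans_le Fact.out), smul_eq_mul]

end IsForwardShift

end ForwardShift

theorem stmt12_general {p : ENNReal} [Fact (1 ≤ p)] (hp : p ≠ ⊤) {w : ℤ → ℂ}
    {T : lp (fun _ : ℤ => ℂ) p →L[ℂ] lp (fun _ : ℤ => ℂ) p} (hT : IsForwardShift w T)
    (hw : ∀ n, 1 ≤ ‖w n‖) {r s : ℝ} (hrs : r < s)
    (hr : ∀ n, 0 ≤ n → ‖w n‖ ≤ r) (hs : ∀ n, n < 0 → s ≤ ‖w n‖) :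
    DiskCyclic T ∧ ¬ Hypercyclic T :=
  have hw₀ : ∀ n, w n ≠ 0 := fun n => norm_pos_iff.1 (one_pos.trans_le (hw n))
  have hs₁ : 1 < s := ((hw 0).trans (hr 0 le_rfl)).trans_lt hrs
  ⟨hT.diskCyclic hp hw₀ hrs hs₁ hr hs, hT.not_hypercyclic hw⟩

theorem stmt12
    (T : lp (fun _ : ℤ => ℂ) 2 →L[ℂ] lp (fun _ : ℤ => ℂ) 2)
    (hT : ∀ (x : lp (fun _ : ℤ => ℂ) 2) (n : ℤ),
      (T x : ∀ _ : ℤ, ℂ) n =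
        ((if 0 ≤ n - 1 then (2 : ℂ) else 3) * (x : ∀ _ : ℤ, ℂ) (n - 1))) :
    DiskCyclic T ∧ ¬ Hypercyclic T := by
  refine stmt12_general (by simp) (w := fun n => if 0 ≤ n then 2 else 3)
    (fun x n => by simpa using hT x (n + 1)) (fun n => ?_) (r := 2) (s := 3) (by norm_num)
    (fun n hn => by simp [hn]) (fun n hn => by simp [hn.not_ge])
  split_ifs <;> norm_num
end

section
/- If T is a bounded operator on a Hilbert space H whose spectrum σ(T) has a connected component σ contained in the open unit disk B(0,1), then T is not diskcyclic. -/
open Filter Topology Pointwise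

/-!
If `x` is a vector with dense disk orbit, then small multiples of `x` are arbitrarily small
vectors whose orbits come arbitrarily close to any given `u`. For such a multiple `y`, with
`Tⁿ y ≈ u`, the polynomial `q z = -∑_{i < n} zⁱ Tⁿ⁻¹⁻ⁱ y` satisfies `(z - T) (q z) = Tⁿ y - zⁿ y`,
so it solves `(z - T) (q z) = u` up to a small error on the whole unit disk. In particular `z - T`
has dense range there.

Enclose a component of the spectrum lying in the disk by an open set `U` whose frontier is in the
resolvent set, and let `‖v‖ ≤ C ‖(z - T) v‖` hold on the frontier. Given `w ∈ U` and a vector `v`,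
take `q` for `u = v`: the function `v - (z - w) q z` equals `v` at `w`, and `z - T` maps it
approximately to `(w - T) v`. By the maximum principle `‖v‖ ≤ C ‖(w - T) v‖`. So `w - T` is
bounded below with dense range, hence invertible, and `U` contains no point of the spectrum.
-/

open scoped NNReal

theorem exists_isClopen_of_connectedComponent_subset {X : Type*} [TopologicalSpace X] [T2Space X]
    [CompactSpace X] {x : X} {V : Set X} (hV : IsOpen V) (h : connectedComponent x ⊆ V) :
    ∃ s : Set X, IsClopen s ∧ x ∈ s ∧ s ⊆ V := by
  rw [connectedComponent_eq_iInter_isClopen] at h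
  let N := {s : Set X // IsClopen s ∧ x ∈ s}
  have : Nonempty N := ⟨⟨Set.univ, isClopen_univ, Set.mem_univ x⟩⟩
  have hdir : Directed (· ⊇ ·) fun s : N => s.val := by
    rintro ⟨s, hs, hxs⟩ ⟨t, ht, hxt⟩
    exact ⟨⟨s ∩ t, hs.inter ht, ⟨hxs, hxt⟩⟩, Set.inter_subset_left, Set.inter_subset_right⟩
  obtain ⟨⟨s, hs, hxs⟩, hsV⟩ := exists_subset_nhds_of_compactSpace hdir
    (fun s : N => s.property.1.isClosed) (fun y hy => hV.mem_nhds (h hy))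
  exact ⟨s, hs, hxs, hsV⟩

theorem exists_isCompact_of_connectedComponentIn_subset {X : Type*} [TopologicalSpace X]
    [T2Space X] {F V : Set X} (hF : IsCompact F) {x : X} (hx : x ∈ F) (hV : IsOpen V)
    (h : connectedComponentIn F x ⊆ V) :
    ∃ K ⊆ F, IsCompact K ∧ IsCompact (F \ K) ∧ x ∈ K ∧ K ⊆ V := by
  have : CompactSpace F := isCompact_iff_compactSpace.mp hF
  rw [connectedComponentIn_eq_image hx, Set.image_subset_iff] at h
  obtain ⟨s, hs, hxs, hsV⟩ := exists_isClopen_of_connectedComponent_subset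
    (hV.preimage continuous_subtype_val) h
  refine ⟨(↑) '' s, Subtype.coe_image_subset F s,
    hs.isClosed.isCompact.image continuous_subtype_val, ?_, ⟨⟨x, hx⟩, hxs, rfl⟩,
    Set.image_subset_iff.mpr hsV⟩
  have himage : F \ (↑) '' s = ((↑) '' sᶜ : Set X) := by
    rw [Set.image_compl_eq_range_sdiff_image Subtype.val_injective, Subtype.range_coe]
  exact himage ▸ hs.compl.isClosed.isCompact.image continuous_subtype_val

theorem exists_isOpen_frontier_disjoint_of_connectedComponentIn_subset {X : Type*}
    [TopologicalSpace X] [LocallyCompactSpace X] [T2Space X] {F V : Set X} (hF : IsCompact F)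
    {x : X} (hx : x ∈ F) (hV : IsOpen V) (h : connectedComponentIn F x ⊆ V) :
    ∃ U : Set X, IsOpen U ∧ x ∈ U ∧ closure U ⊆ V ∧ IsCompact (closure U) ∧
      Disjoint (frontier U) F := by
  obtain ⟨K, -, hK, hFK, hxK, hKV⟩ := exists_isCompact_of_connectedComponentIn_subset hF hx hV h
  obtain ⟨U, hU, hKU, hUV, hUc⟩ := exists_open_between_and_isCompact_closure hK
    (hV.inter hFK.isClosed.isOpen_compl) (fun y hy => ⟨hKV hy, fun hyF => hyF.2 hy⟩)
  refine ⟨U, hU, hKU hxK, fun y hy => (hUV hy).1, hUc, Set.disjoint_left.mpr fun y hyU hyF => ?_⟩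
  rw [hU.frontier_eq] at hyU
  exact (hUV hyU.1).2 ⟨hyF, fun hyK => hyU.2 (hKU hyK)⟩

section Resolvent

variable {𝕜 E : Type*} [NontriviallyNormedField 𝕜] [NormedAddCommGroup E] [NormedSpace 𝕜 E]

theorem algebraMap_sub_apply_sum_pow_smul (T : E →L[𝕜] E) (x : E) (n : ℕ) (z : 𝕜) :
    (algebraMap 𝕜 (E →L[𝕜] E) z - T) (∑ i ∈ Finset.range n, z ^ i • (T ^ (n - 1 - i)) x) =
      z ^ n • x - (T ^ n) x := by
  calc (algebraMap 𝕜 (E →L[𝕜] E) z - T) (∑ i ∈ Finset.range n, z ^ i • (T ^ (n - 1 - i)) x)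
      = ((algebraMap 𝕜 (E →L[𝕜] E) z - T) *
          ∑ i ∈ Finset.range n, algebraMap 𝕜 (E →L[𝕜] E) z ^ i * T ^ (n - 1 - i)) x := by
        simp only [← map_pow, ← Algebra.smul_def, mul_apply_eq_comp, sum_apply, smul_apply]
    _ = (algebraMap 𝕜 (E →L[𝕜] E) z ^ n - T ^ n) x := by
        rw [(Algebra.commute_algebraMap_left z T).mul_geom_sum₂]
    _ = z ^ n • x - (T ^ n) x := by
        rw [← map_pow, sub_apply, ContinuousLinearMap.algebraMap_apply]

theorem antilipschitzWith_algebraMap_sub {T : E →L[𝕜] E} {z : 𝕜} (hz : z ∈ resolventSet 𝕜 T) :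
    AntilipschitzWith ‖resolvent T z‖₊ (algebraMap 𝕜 (E →L[𝕜] E) z - T) := by
  refine ContinuousLinearMap.antilipschitz_of_bound _ fun v => ?_
  have hinv : resolvent T z * (algebraMap 𝕜 (E →L[𝕜] E) z - T) = 1 :=
    Ring.inverse_mul_cancel _ hz
  calc ‖v‖ = ‖resolvent T z ((algebraMap 𝕜 (E →L[𝕜] E) z - T) v)‖ :=
        congrArg norm (DFunLike.congr_fun hinv v).symm
    _ ≤ ‖resolvent T z‖ * ‖(algebraMap 𝕜 (E →L[𝕜] E) z - T) v‖ :=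
        ContinuousLinearMap.le_opNorm _ _

theorem exists_forall_antilipschitzWith_algebraMap_sub [CompleteSpace E] {T : E →L[𝕜] E}
    {K : Set 𝕜} (hK : IsCompact K) (hKT : K ⊆ resolventSet 𝕜 T) :
    ∃ C : ℝ≥0, ∀ z ∈ K, AntilipschitzWith C (algebraMap 𝕜 (E →L[𝕜] E) z - T) := by
  have hcont : ContinuousOn (resolvent T) K := fun z hz =>
    (spectrum.hasDerivAt_resolvent_const_left (hKT hz)).continuousAt.continuousWithinAt
  obtain ⟨C, hC⟩ := (hK.image_of_continuousOn hcont.nnnorm).bddAbove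
  refine ⟨C, fun z hz => ContinuousLinearMap.antilipschitz_of_bound _ fun v => ?_⟩
  exact (ContinuousLinearMap.bound_of_antilipschitz _
    (antilipschitzWith_algebraMap_sub (hKT hz)) v).trans
      (by gcongr; exact hC (Set.mem_image_of_mem _ hz))

theorem isUnit_of_denseRange_of_antilipschitzWith [CompleteSpace E] {S : E →L[𝕜] E} {C : ℝ≥0}
    (hd : DenseRange S) (ha : AntilipschitzWith C S) : IsUnit S :=
  ContinuousLinearMap.isUnit_iff_bijective.mpr <|
    S.bijective_iff_dense_range_and_antilipschitz.mpr
      ⟨Submodule.dense_iff_topologicalClosure_eq_top.mp hd, C, ha⟩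

end Resolvent

section Banach

variable {E : Type*} [NormedAddCommGroup E] [NormedSpace ℂ E] {T : E →L[ℂ] E} {U V : Set ℂ}

/-- The equations `(z - T) (q z) = u`, whose analytic solutions are the local resolvents of `T`
at `u`, have solutions analytic in `z ∈ V` up to an arbitrarily small error, uniform on `V`. This
is the trace that diskcyclicity leaves on the unit disk. -/
def HasApproxLocalResolvents (T : E →L[ℂ] E) (V : Set ℂ) : Prop :=
  ∀ u : E, ∀ ε > 0, ∃ q : ℂ → E, DifferentiableOn ℂ q V ∧
    ∀ z ∈ V, ‖(algebraMap ℂ (E →L[ℂ] E) z - T) (q z) - u‖ < ε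

namespace HasApproxLocalResolvents

theorem denseRange (hT : HasApproxLocalResolvents T V) {w : ℂ} (hw : w ∈ V) :
    DenseRange (algebraMap ℂ (E →L[ℂ] E) w - T) := by
  refine Metric.denseRange_iff.mpr fun u ε hε => ?_
  obtain ⟨q, -, hq⟩ := hT u ε hε
  exact ⟨q w, by simpa only [dist_eq_norm, norm_sub_rev u] using hq w hw⟩

theorem norm_le_of_frontier (hT : HasApproxLocalResolvents T V) (hUV : closure U ⊆ V)
    (hU : Bornology.IsBounded U) {C : ℝ≥0}
    (hC : ∀ z ∈ frontier U, AntilipschitzWith C (algebraMap ℂ (E →L[ℂ] E) z - T))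
    {w : ℂ} (hw : w ∈ closure U) (v : E) {ε : ℝ} (hε : 0 < ε) :
    ‖v‖ ≤ C * (‖(algebraMap ℂ (E →L[ℂ] E) w - T) v‖ + Metric.diam (closure U) * ε) := by
  obtain ⟨q, hq, hqv⟩ := hT v ε hε
  have hq' := hq.mono hUV
  have hd : DifferentiableOn ℂ (fun z => v - (z - w) • q z) (closure U) := by fun_prop
  suffices hfrontier : ∀ z ∈ frontier U, ‖v - (z - w) • q z‖ ≤
      C * (‖(algebraMap ℂ (E →L[ℂ] E) w - T) v‖ + Metric.diam (closure U) * ε) by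
    simpa using Complex.norm_le_of_forall_mem_frontier_norm_le hU hd.diffContOnCl hfrontier hw
  intro z hz
  have hzU : z ∈ closure U := frontier_subset_closure hz
  have hdist : ‖z - w‖ ≤ Metric.diam (closure U) := by
    simpa only [dist_eq_norm] using Metric.dist_le_diam_of_mem hU.closure hzU hw
  have himage : (algebraMap ℂ (E →L[ℂ] E) z - T) (v - (z - w) • q z) =
      (algebraMap ℂ (E →L[ℂ] E) w - T) v -
        (z - w) • ((algebraMap ℂ (E →L[ℂ] E) z - T) (q z) - v) := by
    simp only [map_sub, map_smul, sub_apply, ContinuousLinearMap.algebraMap_apply]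
    module
  calc ‖v - (z - w) • q z‖
      ≤ C * ‖(algebraMap ℂ (E →L[ℂ] E) z - T) (v - (z - w) • q z)‖ :=
        ContinuousLinearMap.bound_of_antilipschitz _ (hC z hz) _
    _ ≤ C * (‖(algebraMap ℂ (E →L[ℂ] E) w - T) v‖ +
          ‖z - w‖ * ‖(algebraMap ℂ (E →L[ℂ] E) z - T) (q z) - v‖) := by
        rw [himage, ← norm_smul]
        gcongr
        exact norm_sub_le _ _
    _ ≤ C * (‖(algebraMap ℂ (E →L[ℂ] E) w - T) v‖ + Metric.diam (closure U) * ε) := by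
        gcongr
        exact (hqv z (hUV hzU)).le

theorem antilipschitzWith_of_frontier (hT : HasApproxLocalResolvents T V) (hUV : closure U ⊆ V)
    (hU : Bornology.IsBounded U) {C : ℝ≥0}
    (hC : ∀ z ∈ frontier U, AntilipschitzWith C (algebraMap ℂ (E →L[ℂ] E) z - T))
    {w : ℂ} (hw : w ∈ closure U) :
    AntilipschitzWith C (algebraMap ℂ (E →L[ℂ] E) w - T) := by
  refine ContinuousLinearMap.antilipschitz_of_bound _ fun v => ?_
  set N := ‖(algebraMap ℂ (E →L[ℂ] E) w - T) v‖
  have hlim : Tendsto (fun ε => C * (N + Metric.diam (closure U) * ε)) (𝓝[>] 0) (𝓝 (C * N)) :=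
    (Continuous.tendsto' (by fun_prop) 0 _ (by simp)).mono_left nhdsWithin_le_nhds
  exact ge_of_tendsto hlim (eventually_mem_nhdsWithin.mono fun ε hε =>
    hT.norm_le_of_frontier hUV hU hC hw v hε)

theorem not_connectedComponentIn_spectrum_subset [CompleteSpace E]
    (hT : HasApproxLocalResolvents T V) (hV : IsOpen V) {w : ℂ} (hw : w ∈ spectrum ℂ T) :
    ¬ connectedComponentIn (spectrum ℂ T) w ⊆ V := by
  intro h
  obtain ⟨U, -, hwU, hUV, hUc, hUT⟩ :=
    exists_isOpen_frontier_disjoint_of_connectedComponentIn_subset (spectrum.isCompact T) hw hV h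
  have hfrontier : IsCompact (frontier U) := hUc.of_isClosed_subset isClosed_frontier
    frontier_subset_closure
  obtain ⟨C, hC⟩ := exists_forall_antilipschitzWith_algebraMap_sub hfrontier
    (Set.disjoint_compl_right_iff_subset.mp hUT)
  have hwU' : w ∈ closure U := subset_closure hwU
  exact hw (isUnit_of_denseRange_of_antilipschitzWith (hT.denseRange (hUV hwU'))
    (hT.antilipschitzWith_of_frontier hUV (hUc.isBounded.subset subset_closure) hC hwU'))

end HasApproxLocalResolvents

namespace DiskCyclic

theorem exists_norm_lt_and_norm_pow_apply_sub_lt (hT : DiskCyclic T) (u : E) {ε : ℝ} (hε : 0 < ε) :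
    ∃ (y : E) (n : ℕ), ‖y‖ < ε ∧ ‖(T ^ n) y - u‖ < ε := by
  obtain ⟨x, hx⟩ := hT
  obtain ⟨c, hc, hcx⟩ := exists_pos_mul_lt hε ‖x‖
  have hc' : (c : ℂ) ≠ 0 := by exact_mod_cast hc.ne'
  have hnorm : ‖(c : ℂ)‖ = c := by rw [Complex.norm_real, Real.norm_of_nonneg hc.le]
  obtain ⟨_, ⟨n, α, hα, rfl⟩, hn⟩ := hx.exists_dist_lt ((c : ℂ)⁻¹ • u) (div_pos hε hc)
  refine ⟨(c : ℂ) • α • x, n, ?_, ?_⟩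
  · calc ‖(c : ℂ) • α • x‖ = ‖α‖ * (‖x‖ * c) := by rw [norm_smul, norm_smul, hnorm]; ring
      _ ≤ ‖x‖ * c := mul_le_of_le_one_left (by positivity) hα
      _ < ε := hcx
  · calc ‖(T ^ n) ((c : ℂ) • α • x) - u‖ = ‖(c : ℂ) • (α • (T ^ n) x - (c : ℂ)⁻¹ • u)‖ := by
          rw [map_smul, map_smul, smul_sub, smul_inv_smul₀ hc']
      _ = c * dist ((c : ℂ)⁻¹ • u) (α • (T ^ n) x) := by
          rw [norm_smul, hnorm, dist_comm, dist_eq_norm]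
      _ < ε := (lt_div_iff₀' hc).mp hn

theorem hasApproxLocalResolvents (hT : DiskCyclic T) :
    HasApproxLocalResolvents T (Metric.ball 0 1) := by
  intro u ε hε
  obtain ⟨y, n, hy, hyu⟩ := hT.exists_norm_lt_and_norm_pow_apply_sub_lt u (half_pos hε)
  refine ⟨fun z => -∑ i ∈ Finset.range n, z ^ i • (T ^ (n - 1 - i)) y, by fun_prop,
    fun z hz => ?_⟩
  have hpow : ‖z ^ n • y‖ ≤ ‖y‖ := by
    rw [norm_smul, norm_pow]
    exact mul_le_of_le_one_left (norm_nonneg y)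
      (pow_le_one₀ (norm_nonneg z) (mem_ball_zero_iff.mp hz).le)
  rw [map_neg, algebraMap_sub_apply_sum_pow_smul, neg_sub, sub_right_comm]
  linarith [norm_sub_le ((T ^ n) y - u) (z ^ n • y)]

end DiskCyclic

end Banach

theorem stmt15_general {E : Type*} [NormedAddCommGroup E] [NormedSpace ℂ E] [CompleteSpace E]
    (T : E →L[ℂ] E)
    (h : ∃ z ∈ spectrum ℂ T, connectedComponentIn (spectrum ℂ T) z ⊆ Metric.ball (0 : ℂ) 1) :
    ¬ DiskCyclic T := by
  intro hT
  obtain ⟨z, hz, hsub⟩ := h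
  exact hT.hasApproxLocalResolvents.not_connectedComponentIn_spectrum_subset Metric.isOpen_ball hz
    hsub

theorem stmt15 {H : Type*} [NormedAddCommGroup H] [InnerProductSpace ℂ H] [CompleteSpace H]
    (T : H →L[ℂ] H)
    (h : ∃ z ∈ spectrum ℂ T, connectedComponentIn (spectrum ℂ T) z ⊆ Metric.ball (0 : ℂ) 1) :
    ¬ DiskCyclic T :=
  stmt15_general T h
end
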